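/- arXiv:1011.1395 — 14 statements merged into one kernel-verified Lean document; each statement's English description precedes it below -/
import Mathlib

section
/- For every integer N ≥ 1, setting θ = 2^N ∈ ℚ_2, the element θ² − 2θ − 3 is not a square in ℚ_2; consequently the quadratic equation x² + (2θ − θ² + 1)x + 1 = 0 has no solution x ∈ ℚ_2. -/
theorem stmt_0 (N : ℕ) (hN : 1 ≤ N) (θ : ℚ_[2]) (hθ : θ = (2 : ℚ_[2]) ^ N) :
    ¬ IsSquare (θ ^ 2 - 2 * θ - 3) ∧
    ¬ ∃ x : ℚ_[2], x ^ 2 + (2 * θ - θ ^ 2 + 1) * x + 1 = 0 := by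
  have key : ¬ IsSquare (θ ^ 2 - 2 * θ - 3) := by
    rintro ⟨y, hy⟩
    set c : ℤ_[2] := ((2 : ℤ_[2]) ^ N) ^ 2 - 2 * 2 ^ N - 3 with hc
    have hcy : (c : ℚ_[2]) = y * y := by
      rw [← hy, hθ, hc]; push_cast; rfl
    have hn : ‖y‖ ≤ 1 := by
      have h1 : ‖(c : ℚ_[2])‖ ≤ 1 := c.2
      rw [hcy, norm_mul] at h1
      nlinarith [norm_nonneg y]
    obtain ⟨w, hw⟩ : ∃ w : ℤ_[2], (w : ℚ_[2]) = y := ⟨⟨y, hn⟩, rfl⟩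
    have hz : c = w * w := by
      apply PadicInt.ext; rw [hcy, PadicInt.coe_mul, hw]
    have h := congrArg (PadicInt.toZModPow (p := 2) 3) hz
    obtain ⟨k, rfl⟩ : ∃ k, N = k + 1 := ⟨N - 1, by omega⟩
    rw [hc, map_mul] at h
    simp only [map_sub, map_mul, map_pow, map_ofNat, pow_succ (2 : ZMod (2 ^ 3)) k] at h
    generalize (PadicInt.toZModPow (p := 2) 3) w = z at h
    generalize (2 : ZMod (2 ^ 3)) ^ k = m at h
    revert m z
    change ∀ z m : ZMod 8, (m * 2) ^ 2 - 2 * (m * 2) - 3 = z * z → False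
    decide
  refine ⟨key, ?_⟩
  rintro ⟨x, hx⟩
  apply key
  have h1 : θ - 1 ≠ 0 := by
    intro h
    have h2 : (2 : ℚ_[2]) ^ N = 1 := by rw [← hθ]; exact sub_eq_zero.mp h
    have h3 : (2 : ℕ) ^ N = 1 := by exact_mod_cast h2
    have := Nat.one_lt_two_pow (n := N) (by omega)
    omega
  refine ⟨(2 * x + (2 * θ - θ ^ 2 + 1)) / (θ - 1), ?_⟩
  field_simp
  linear_combination (-4) * hx
end

section
/- For every integer N ≥ 2, setting θ = 3^N ∈ ℚ_3, the element θ² − 2θ − 3 is not a square in ℚ_3; consequently the quadratic equation x² + (2θ − θ² + 1)x + 1 = 0 has no solution x ∈ ℚ_3. -/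
theorem stmt_1 (N : ℕ) (hN : 2 ≤ N) (θ : ℚ_[3]) (hθ : θ = (3 : ℚ_[3]) ^ N) :
    ¬ IsSquare (θ ^ 2 - 2 * θ - 3) ∧
    ¬ ∃ x : ℚ_[3], x ^ 2 + (2 * θ - θ ^ 2 + 1) * x + 1 = 0 := by
  have h1 : ¬ IsSquare (θ ^ 2 - 2 * θ - 3) := by
    obtain ⟨k, rfl⟩ := Nat.exists_eq_add_of_le hN
    set m : ℤ := 27 * (3 ^ k) ^ 2 - 6 * 3 ^ k - 1 with hm
    have hmd : ¬ (3 : ℤ) ∣ m := by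
      generalize (3 : ℤ) ^ k = t at hm
      generalize t ^ 2 = u at hm
      omega
    have hm0 : m ≠ 0 := fun h => hmd (h ▸ dvd_zero _)
    have e : θ ^ 2 - 2 * θ - 3 = ((3 : ℕ) : ℚ_[3]) * (m : ℚ_[3]) := by
      rw [hθ, hm]; push_cast; ring
    have hmq : (m : ℚ_[3]) ≠ 0 := by exact_mod_cast hm0
    have h3 : ((3 : ℕ) : ℚ_[3]) ≠ 0 := by norm_num
    rintro ⟨r, hr⟩
    rw [e] at hr
    have hr0 : r ≠ 0 := by
      rintro rfl
      exact mul_ne_zero h3 hmq (by simpa using hr)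
    have hv := congrArg Padic.valuation hr
    rw [Padic.valuation_mul h3 hmq, Padic.valuation_mul hr0 hr0, Padic.valuation_p,
      Padic.valuation_intCast, padicValInt.eq_zero_of_not_dvd (by exact_mod_cast hmd)] at hv
    push_cast at hv
    omega
  refine ⟨h1, ?_⟩
  rintro ⟨x, hx⟩
  have hne : θ - 1 ≠ 0 := by
    intro h
    have h' : ((3 ^ N : ℕ) : ℚ_[3]) = ((1 : ℕ) : ℚ_[3]) := by
      push_cast; rw [← hθ]; exact sub_eq_zero.mp h
    have h'' : 3 ^ N = 1 := Nat.cast_injective h'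
    have := Nat.one_lt_pow (n := N) (a := 3) (by omega) (by norm_num)
    omega
  apply h1
  refine ⟨(2 * x + (2 * θ - θ ^ 2 + 1)) / (θ - 1), ?_⟩
  field_simp
  linear_combination (-4) * hx
end

section
/- Let p ≥ 5 be a prime and N ≥ 1 an integer, and set θ = p^N ∈ ℚ_p. Then θ² − 2θ − 3 is a square in ℚ_p if and only if −3 is a square in ZMod p (i.e. −3 is a quadratic residue modulo p); equivalently, the quadratic equation x² + (2θ − θ² + 1)x + 1 = 0 has a solution in ℚ_p if and only if −3 is a square in ZMod p. -/
theorem padic_aux (p : ℕ) [Fact p.Prime] (hp : 5 ≤ p) (u : ℤ_[p])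
    (hu : PadicInt.toZMod u = -3) :
    IsSquare (u : ℚ_[p]) ↔ IsSquare (-3 : ZMod p) := by
  have hker : ∀ z : ℤ_[p], PadicInt.toZMod z = 0 ↔ ‖z‖ < 1 := by
    intro z
    rw [← RingHom.mem_ker, PadicInt.ker_toZMod, IsLocalRing.mem_maximalIdeal,
      PadicInt.mem_nonunits]
  have hsmall : ∀ k : ℕ, 0 < k → k < 5 → (k : ZMod p) ≠ 0 := by
    intro k hk hk5 h
    rw [ZMod.natCast_eq_zero_iff] at h
    have := Nat.le_of_dvd hk h
    omega
  have h2 : (2 : ZMod p) ≠ 0 := by exact_mod_cast hsmall 2 (by norm_num) (by norm_num)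
  have h3 : (3 : ZMod p) ≠ 0 := by exact_mod_cast hsmall 3 (by norm_num) (by norm_num)
  constructor
  · rintro ⟨y, hy⟩
    have hy1 : ‖y‖ ≤ 1 := by
      have h1 : ‖y‖ * ‖y‖ ≤ 1 := by
        rw [← norm_mul, ← hy]; exact u.2
      nlinarith [norm_nonneg y]
    obtain ⟨w, hw⟩ : ∃ w : ℤ_[p], (w : ℚ_[p]) = y := ⟨⟨y, hy1⟩, rfl⟩
    have huw : u = w * w := by
      apply Subtype.ext
      rw [PadicInt.coe_mul, hw]; exact hy
    exact ⟨PadicInt.toZMod w, by rw [← hu, huw, map_mul]⟩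
  · rintro ⟨r, hr⟩
    obtain ⟨a, rfl⟩ := ZMod.ringHom_surjective (PadicInt.toZMod (p := p)) r
    have hd : ‖(2 * a : ℤ_[p])‖ = 1 := by
      apply le_antisymm (PadicInt.norm_le_one _)
      by_contra! h
      rw [← hker, map_mul, map_ofNat] at h
      rcases mul_eq_zero.1 h with h | h
      · exact h2 h
      · rw [h] at hr
        apply h3
        linear_combination -hr
    have hF : ‖(a ^ 2 - u : ℤ_[p])‖ < 1 := by
      rw [← hker, map_sub, map_pow, hu, hr]; ring
    obtain ⟨z, hz, -⟩ := hensels_lemma (p := p) (R := ℤ_[p])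
      (F := (Polynomial.X ^ 2 - Polynomial.C u : Polynomial ℤ_[p])) (a := a) (by
        simp only [map_sub, map_pow, Polynomial.aeval_X, Polynomial.aeval_C,
          Polynomial.derivative_X_pow, Polynomial.derivative_C, sub_zero, map_mul]
        simpa [hd, ← norm_mul] using hF)
    refine ⟨z, ?_⟩
    have : z ^ 2 - u = 0 := by simpa using hz
    have h' : u = z * z := by linear_combination -this
    rw [h']; simp

theorem stmt_2 (p : ℕ) [Fact p.Prime] (hp : 5 ≤ p) (N : ℕ) (hN : 1 ≤ N)
    (θ : ℚ_[p]) (hθ : θ = (p : ℚ_[p]) ^ N) :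
    (IsSquare (θ ^ 2 - 2 * θ - 3) ↔ IsSquare (-3 : ZMod p)) ∧
    ((∃ x : ℚ_[p], x ^ 2 + (2 * θ - θ ^ 2 + 1) * x + 1 = 0) ↔ IsSquare (-3 : ZMod p)) := by
  have key : IsSquare (θ ^ 2 - 2 * θ - 3) ↔ IsSquare (-3 : ZMod p) := by
    rw [← padic_aux p hp (((p : ℤ_[p]) ^ N) ^ 2 - 2 * (p : ℤ_[p]) ^ N - 3)]
    · rw [hθ]; push_cast; rfl
    · have : N ≠ 0 := by omega
      simp [this]
      exact map_ofNat _ 3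
  refine ⟨key, ?_⟩
  rw [← key]
  have h1 : θ - 1 ≠ 0 := by
    intro h
    have h' : (p : ℚ_[p]) ^ N = 1 := by rw [← hθ]; linear_combination h
    have h'' : p ^ N = 1 := by exact_mod_cast h'
    rcases Nat.pow_eq_one.1 h'' with h | h <;> omega
  constructor
  · rintro ⟨x, hx⟩
    refine ⟨(2 * x + (2 * θ - θ ^ 2 + 1)) / (θ - 1), ?_⟩
    field_simp
    linear_combination -4 * hx
  · rintro ⟨s, hs⟩
    refine ⟨(-(2 * θ - θ ^ 2 + 1) + (θ - 1) * s) / 2, ?_⟩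
    linear_combination -(θ - 1) ^ 2 / 4 * hs
end

section
/- Let p be a prime, let q ≥ 2 be an integer divisible by p, let N ≥ 1 be an integer, and set θ = p^N ∈ ℚ_p. Then θ² − 2θ − 4q + 1 is a nonzero square in ℚ_p, and consequently the quadratic equation x² + (2θ − θ² + 2q − 1)x + q² = 0 has two distinct solutions in ℚ_p. -/
theorem stmt_3 (p : ℕ) [Fact p.Prime] (q : ℕ) (hq : 2 ≤ q) (hpq : p ∣ q)
    (N : ℕ) (hN : 1 ≤ N) (θ : ℚ_[p]) (hθ : θ = (p : ℚ_[p]) ^ N) :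
    (θ ^ 2 - 2 * θ - 4 * q + 1 ≠ 0 ∧ IsSquare (θ ^ 2 - 2 * θ - 4 * q + 1)) ∧
    ∃ x₁ x₂ : ℚ_[p], x₁ ≠ x₂ ∧
      x₁ ^ 2 + (2 * θ - θ ^ 2 + 2 * q - 1) * x₁ + q ^ 2 = 0 ∧
      x₂ ^ 2 + (2 * θ - θ ^ 2 + 2 * q - 1) * x₂ + q ^ 2 = 0 := by
  have hp1 : ‖(p : ℤ_[p])‖ < 1 := by
    rw [PadicInt.norm_p]
    exact inv_lt_one_of_one_lt₀ (by exact_mod_cast (Fact.out : p.Prime).one_lt)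
  have hpN : ‖(p : ℤ_[p]) ^ N‖ < 1 := by
    rw [norm_pow]
    exact pow_lt_one₀ (norm_nonneg _) hp1 (by omega)
  have hqn : ‖(q : ℤ_[p])‖ < 1 := by
    obtain ⟨k, rfl⟩ := hpq
    rw [Nat.cast_mul, norm_mul]
    exact mul_lt_one_of_nonneg_of_lt_one_left (norm_nonneg _) hp1 (PadicInt.norm_le_one _)
  obtain ⟨u, hu⟩ : ∃ u : ℤ_[p], u = 1 - (p : ℤ_[p]) ^ N := ⟨_, rfl⟩
  have hun : ‖u‖ = 1 := by
    by_contra h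
    have h2 : ‖u‖ < 1 := lt_of_le_of_ne (PadicInt.norm_le_one _) h
    have h3 := PadicInt.nonarchimedean u ((p : ℤ_[p]) ^ N)
    rw [hu, sub_add_cancel, norm_one, ← hu] at h3
    exact absurd (max_lt h2 hpN) (not_lt.mpr h3)
  obtain ⟨y, hy, -, hyd, -⟩ := hensels_lemma (p := p) (R := ℤ_[p])
    (F := Polynomial.X ^ 2 - Polynomial.C u * Polynomial.X + Polynomial.C (q : ℤ_[p]))
    (a := 0) (by simpa [hun] using hqn)
  simp [hun] at hy hyd
  have hd0 : (2 * y - u : ℤ_[p]) ≠ 0 := by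
    intro h
    rw [one_add_one_eq_two, h] at hyd
    simp at hyd
  have hu0 : u ≠ 0 := by
    rintro rfl
    simp at hun
  have hd : 2 * (y : ℚ_[p]) - u ≠ 0 := by
    intro h
    apply hd0
    apply Subtype.ext
    push_cast
    exact h
  have hu' : (u : ℚ_[p]) ≠ 0 := fun h => hu0 (Subtype.ext h)
  have hy' : (y : ℚ_[p]) ^ 2 - u * y + q = 0 := by
    have := congrArg (fun t : ℤ_[p] => (t : ℚ_[p])) hy
    simpa using this
  have ht : θ = 1 - (u : ℚ_[p]) := by rw [hθ, hu]; push_cast; ring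
  generalize (u : ℚ_[p]) = v at *
  generalize (y : ℚ_[p]) = z at *
  have hq' : (q : ℚ_[p]) = v * z - z ^ 2 := by linear_combination hy'
  have hD : θ ^ 2 - 2 * θ - 4 * q + 1 = (2 * z - v) * (2 * z - v) := by
    rw [ht, hq']; ring
  refine ⟨⟨by rw [hD]; exact mul_ne_zero hd hd, _, hD⟩, z ^ 2, (v - z) ^ 2, ?_, ?_, ?_⟩
  · intro h
    exact mul_ne_zero hu' hd (by linear_combination h)
  · rw [ht, hq']; ring
  · rw [ht, hq']; ring
end

section
/- Let q ≥ 2 be an integer with q ≡ 2 (mod 3), let N ≥ 1 be an integer, and set θ = 3^N ∈ ℚ_3. Then θ² − 2θ − 4q + 1 is not a square in ℚ_3, and consequently the quadratic equation x² + (2θ − θ² + 2q − 1)x + q² = 0 has no solution in ℚ_3. -/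
theorem aux_nonsq (d : ℤ) (hd : d % 3 = 2) : ¬ IsSquare ((d : ℤ) : ℚ_[3]) := by
  rintro ⟨r, hr⟩
  have h1 : ‖r‖ ≤ 1 := by
    have h := Padic.norm_int_le_one (p := 3) d
    rw [hr, norm_mul] at h
    nlinarith [norm_nonneg r]
  obtain ⟨z, rfl⟩ : ∃ z : ℤ_[3], (z : ℚ_[3]) = r := ⟨⟨r, h1⟩, rfl⟩
  have h2 : ((d : ℤ) : ℤ_[3]) = z * z := by
    apply Subtype.ext
    push_cast
    exact hr
  have h3 := congrArg (PadicInt.toZMod (p := 3)) h2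
  rw [map_mul, map_intCast] at h3
  have h4 : ((d : ℤ) : ZMod 3) = ((2 : ℤ) : ZMod 3) := by
    rw [ZMod.intCast_eq_intCast_iff]
    exact hd
  rw [h4] at h3
  generalize PadicInt.toZMod (p := 3) z = w at h3
  revert w
  decide

theorem stmt_4 (q : ℕ) (hq : 2 ≤ q) (hq3 : q % 3 = 2)
    (N : ℕ) (hN : 1 ≤ N) (θ : ℚ_[3]) (hθ : θ = (3 : ℚ_[3]) ^ N) :
    ¬ IsSquare (θ ^ 2 - 2 * θ - 4 * q + 1) ∧
    ¬ ∃ x : ℚ_[3], x ^ 2 + (2 * θ - θ ^ 2 + 2 * q - 1) * x + q ^ 2 = 0 := by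
  have key : ¬ IsSquare (θ ^ 2 - 2 * θ - 4 * q + 1) := by
    obtain ⟨m, rfl⟩ : ∃ m, N = m + 1 := ⟨N - 1, by omega⟩
    have h := aux_nonsq (3 * (3 ^ m * (3 * 3 ^ m) - 2 * 3 ^ m) - 4 * q + 1) (by
      generalize (3 ^ m * (3 * 3 ^ m) - 2 * 3 ^ m : ℤ) = k
      omega)
    convert h using 1
    rw [hθ]
    push_cast
    ring_nf
  refine ⟨key, ?_⟩
  rintro ⟨x, hx⟩
  have h1 : θ - 1 ≠ 0 := by
    rw [hθ, sub_ne_zero]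
    have : (3 : ℕ) ^ N ≠ 1 := (Nat.one_lt_pow (by omega) (by norm_num)).ne'
    exact_mod_cast this
  apply key
  refine ⟨(2 * x + (2 * θ - θ ^ 2 + 2 * q - 1)) / (θ - 1), ?_⟩
  field_simp
  linear_combination (-4) * hx
end

section
/- Let p be a prime, let q ≥ 1 be an integer, let M ≥ 2 be an even integer, and set θ = p^{−M} ∈ ℚ_p (the inverse of p^M). Then θ² − 2θ − 4q + 1 is a nonzero square in ℚ_p, and consequently the quadratic equation x² + (2θ − θ² + 2q − 1)x + q² = 0 has two distinct solutions in ℚ_p. -/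
theorem stmt_5 (p : ℕ) [Fact p.Prime] (q : ℕ) (hq : 1 ≤ q)
    (M : ℕ) (hM : 2 ≤ M) (hMeven : Even M)
    (θ : ℚ_[p]) (hθ : θ = ((p : ℚ_[p]) ^ M)⁻¹) :
    (θ ^ 2 - 2 * θ - 4 * q + 1 ≠ 0 ∧ IsSquare (θ ^ 2 - 2 * θ - 4 * q + 1)) ∧
    ∃ x₁ x₂ : ℚ_[p], x₁ ≠ x₂ ∧
      x₁ ^ 2 + (2 * θ - θ ^ 2 + 2 * q - 1) * x₁ + q ^ 2 = 0 ∧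
      x₂ ^ 2 + (2 * θ - θ ^ 2 + 2 * q - 1) * x₂ + q ^ 2 = 0 := by
  have hp : p.Prime := Fact.out
  have hP0 : (p : ℚ_[p]) ^ M ≠ 0 := pow_ne_zero _ (by exact_mod_cast hp.ne_zero)
  have hPn : ‖(p : ℤ_[p]) ^ M‖ < 1 := by
    rw [norm_pow]
    exact pow_lt_one₀ (norm_nonneg _) (by rw [PadicInt.norm_p]; exact inv_lt_one_of_one_lt₀ (by exact_mod_cast hp.one_lt)) (by omega)
  have hun : ‖1 - (p : ℤ_[p]) ^ M‖ = 1 := by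
    have h := PadicInt.norm_add_eq_max_of_ne
      (q := (1 : ℤ_[p])) (r := -(p : ℤ_[p]) ^ M) (by rw [norm_one, norm_neg]; exact hPn.ne')
    rw [sub_eq_add_neg, h, norm_one, norm_neg, max_eq_left hPn.le]
  let F : Polynomial ℤ_[p] := Polynomial.X ^ 2
    - Polynomial.C (1 - (p : ℤ_[p]) ^ M) * Polynomial.X
    + Polynomial.C ((q : ℤ_[p]) * ((p : ℤ_[p]) ^ M) ^ 2)
  have hF : ∀ z : ℤ_[p], F.aeval z
      = z ^ 2 - (1 - (p : ℤ_[p]) ^ M) * z + q * ((p : ℤ_[p]) ^ M) ^ 2 := by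
    intro z; simp [F]
  have hF' : ∀ z : ℤ_[p], F.derivative.aeval z = 2 * z - (1 - (p : ℤ_[p]) ^ M) := by
    intro z
    simp only [F, Polynomial.derivative_add, Polynomial.derivative_sub,
      Polynomial.derivative_X_sq, Polynomial.derivative_C_mul, Polynomial.derivative_X,
      Polynomial.derivative_C]
    simp
  have hd : ‖F.derivative.aeval (1 - (p : ℤ_[p]) ^ M)‖ = 1 := by
    rw [hF', ← hun]; congr 1; ring
  obtain ⟨z, hz, -, hz', -⟩ := hensels_lemma (F := F) (a := 1 - (p : ℤ_[p]) ^ M) (by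
    rw [hd, hF]
    have : (1 - (p : ℤ_[p]) ^ M) ^ 2 - (1 - (p : ℤ_[p]) ^ M) * (1 - (p : ℤ_[p]) ^ M)
      + q * ((p : ℤ_[p]) ^ M) ^ 2 = (q * (p : ℤ_[p]) ^ M) * (p : ℤ_[p]) ^ M := by ring
    rw [this, norm_mul, one_pow]
    exact (mul_le_of_le_one_left (norm_nonneg _) (PadicInt.norm_le_one _)).trans_lt hPn)
  rw [hd, hF'] at hz'
  rw [hF] at hz
  have hw0 : 2 * (z : ℚ_[p]) - (1 - (p : ℚ_[p]) ^ M) ≠ 0 := by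
    intro h
    have : 2 * z - (1 - (p : ℤ_[p]) ^ M) = 0 := by
      apply Subtype.ext
      push_cast
      exact_mod_cast h
    rw [this] at hz'
    simp at hz'
  have hzq : (z : ℚ_[p]) ^ 2 - (1 - (p : ℚ_[p]) ^ M) * z + q * ((p : ℚ_[p]) ^ M) ^ 2 = 0 := by
    have := congrArg (fun x : ℤ_[p] => (x : ℚ_[p])) hz
    push_cast at this
    exact this
  have hP1 : (p : ℚ_[p]) ^ M ≠ 1 := by
    intro h
    have h2 : (p : ℤ_[p]) ^ M = 1 := by
      apply Subtype.ext
      push_cast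
      exact_mod_cast h
    rw [h2] at hPn
    simp at hPn
  generalize (p : ℚ_[p]) ^ M = P at *
  have hθP : θ * P = 1 := by rw [hθ]; exact inv_mul_cancel₀ hP0
  have hθ0 : θ ≠ 0 := left_ne_zero_of_mul_eq_one hθP
  have hθ1 : θ - 1 ≠ 0 := by
    intro h
    apply hP1
    have : θ = 1 := by linear_combination h
    rw [this] at hθP; simpa using hθP
  obtain ⟨s, hs⟩ : ∃ s, s = θ * (2 * (z : ℚ_[p]) - (1 - P)) := ⟨_, rfl⟩
  have hs0 : s ≠ 0 := by rw [hs]; exact mul_ne_zero hθ0 hw0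
  have hD : θ ^ 2 - 2 * θ - 4 * q + 1 = s * s := by
    have h1 : s * s = (θ - θ * P) ^ 2 - 4 * q * (θ * P) ^ 2 := by
      rw [hs]; linear_combination 4 * θ ^ 2 * hzq
    rw [h1, hθP]; ring
  refine ⟨⟨by rw [hD]; exact mul_ne_zero hs0 hs0, s, hD⟩,
    (-(2 * θ - θ ^ 2 + 2 * q - 1) + (θ - 1) * s) / 2,
    (-(2 * θ - θ ^ 2 + 2 * q - 1) - (θ - 1) * s) / 2, ?_, ?_, ?_⟩
  · intro h
    apply mul_ne_zero hθ1 hs0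
    linear_combination h
  · linear_combination (-(θ - 1) ^ 2 / 4) * hD
  · linear_combination (-(θ - 1) ^ 2 / 4) * hD
end

section
/- Let p be an odd prime, let q ≥ 2 be an integer divisible by p, let N ≥ 1 be an integer, set θ = p^N ∈ ℚ_p, and assume ‖θ‖_p ≤ ‖q‖_p². Let x₁ ≠ x₂ be two distinct roots in ℚ_p of x² + (2θ − θ² + 2q − 1)x + q² = 0, labelled so that ‖x₁‖_p ≤ ‖x₂‖_p. Then: ‖x₁‖_p = ‖q‖_p², ‖x₂‖_p = 1, ‖θx₁ + q‖_p = ‖q‖_p, ‖x₁ + θ + q − 1‖_p = 1, ‖θx₂ + q‖_p = ‖q‖_p, and ‖x₂ + θ + q − 1‖_p = ‖q‖_p. -/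
theorem dom_aux {p : ℕ} [Fact p.Prime] (a b : ℚ_[p]) (h : ‖b‖ < ‖a‖) : ‖a + b‖ = ‖a‖ := by
  rw [IsUltrametricDist.norm_add_eq_max_of_norm_ne_norm h.ne', max_eq_left h.le]

theorem small_aux {p : ℕ} [Fact p.Prime] (a b : ℚ_[p]) (c : ℝ) (ha : ‖a‖ < c) (hb : ‖b‖ < c) :
    ‖a + b‖ < c :=
  (IsUltrametricDist.norm_add_le_max a b).trans_lt (max_lt ha hb)


theorem stmt_6 (p : ℕ) [Fact p.Prime] (hp2 : p ≠ 2)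
    (q : ℕ) (hq : 2 ≤ q) (hpq : p ∣ q)
    (N : ℕ) (hN : 1 ≤ N) (θ : ℚ_[p]) (hθ : θ = (p : ℚ_[p]) ^ N)
    (hθq : ‖θ‖ ≤ ‖(q : ℚ_[p])‖ ^ 2)
    (x₁ x₂ : ℚ_[p]) (hx : x₁ ≠ x₂)
    (h₁ : x₁ ^ 2 + (2 * θ - θ ^ 2 + 2 * q - 1) * x₁ + q ^ 2 = 0)
    (h₂ : x₂ ^ 2 + (2 * θ - θ ^ 2 + 2 * q - 1) * x₂ + q ^ 2 = 0)
    (hord : ‖x₁‖ ≤ ‖x₂‖) :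
    ‖x₁‖ = ‖(q : ℚ_[p])‖ ^ 2 ∧ ‖x₂‖ = 1 ∧
    ‖θ * x₁ + q‖ = ‖(q : ℚ_[p])‖ ∧ ‖x₁ + θ + q - 1‖ = 1 ∧
    ‖θ * x₂ + q‖ = ‖(q : ℚ_[p])‖ ∧ ‖x₂ + θ + q - 1‖ = ‖(q : ℚ_[p])‖ := by
  have hq1 : ‖(q : ℚ_[p])‖ < 1 := by
    exact Padic.norm_natCast_lt_one_iff.2 hpq
  have hq0 : 0 < ‖(q : ℚ_[p])‖ := by
    rw [norm_pos_iff]; exact_mod_cast (by omega : q ≠ 0)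
  have hqq : ‖(q : ℚ_[p])‖ ^ 2 < ‖(q : ℚ_[p])‖ := by nlinarith
  have hθ1 : ‖θ‖ < ‖(q : ℚ_[p])‖ := hθq.trans_lt hqq
  have hθ2 : ‖-θ ^ 2‖ < ‖(q : ℚ_[p])‖ := by
    rw [norm_neg, norm_pow]; nlinarith [norm_nonneg θ]
  have hsum : x₁ + x₂ = 1 + -(2 * θ - θ ^ 2 + 2 * q) := by
    have : (x₁ - x₂) * (x₁ + x₂ - (1 + -(2 * θ - θ ^ 2 + 2 * q))) = 0 := by
      linear_combination h₁ - h₂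
    rcases mul_eq_zero.1 this with h | h
    · exact absurd (sub_eq_zero.1 h) hx
    · exact sub_eq_zero.1 h
  have hprod : x₁ * x₂ = (q : ℚ_[p]) ^ 2 := by
    linear_combination x₁ * hsum - h₁
  have hA : ‖θ + -θ ^ 2 + q + (θ + q)‖ < 1 := by
    refine small_aux _ _ _ (small_aux _ _ _ (small_aux _ _ _ ?_ ?_) hq1) (small_aux _ _ _ ?_ hq1) <;>
      linarith
  have hs1 : ‖x₁ + x₂‖ = 1 := by
    rw [hsum, dom_aux, norm_one]
    rw [norm_neg, norm_one]
    have e : 2 * θ - θ ^ 2 + 2 * (q : ℚ_[p]) = θ + -θ ^ 2 + q + (θ + q) := by ring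
    rw [e]; exact hA
  have hpn : ‖x₁‖ * ‖x₂‖ = ‖(q : ℚ_[p])‖ ^ 2 := by rw [← norm_mul, hprod, norm_pow]
  have hlt : ‖x₁‖ < ‖x₂‖ := by
    rcases hord.lt_or_eq with h | h
    · exact h
    · exfalso
      have h1 : ‖x₁‖ < 1 := by
        by_contra hc
        push Not at hc
        nlinarith
      have := small_aux x₁ x₂ 1 h1 (h ▸ h1)
      linarith
  have hx2 : ‖x₂‖ = 1 := by
    rw [← dom_aux x₂ x₁ hlt, add_comm, hs1]
  have hx1 : ‖x₁‖ = ‖(q : ℚ_[p])‖ ^ 2 := by rw [← hpn, hx2, mul_one]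
  refine ⟨hx1, hx2, ?_, ?_, ?_, ?_⟩
  · rw [add_comm, dom_aux]
    rw [norm_mul]; nlinarith [norm_nonneg θ]
  · have : x₁ + θ + q - 1 = -1 + (x₁ + θ + q) := by ring
    rw [this, dom_aux, norm_neg, norm_one]
    rw [norm_neg, norm_one]
    refine small_aux _ _ _ (small_aux _ _ _ ?_ ?_) hq1 <;> linarith
  · rw [add_comm, dom_aux]
    rw [norm_mul, hx2, mul_one]; exact hθ1
  · have : x₂ + θ + q - 1 = -(q + (x₁ + θ + -θ ^ 2)) := by linear_combination hsum
    rw [this, norm_neg, dom_aux]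
    exact small_aux _ _ _ (small_aux _ _ _ (by linarith) hθ1) hθ2
end

section
/- Let p be an odd prime, let q ≥ 1 be an integer not divisible by p, let N ≥ 1 be an integer, and set θ = p^N ∈ ℚ_p. Let x₁ ≠ x₂ be two distinct roots in ℚ_p of x² + (2θ − θ² + 2q − 1)x + q² = 0. Then for i = 1, 2: ‖x_i‖_p = 1, ‖θx_i + q‖_p = 1, and ‖x_i + θ + q − 1‖_p = 1. -/
theorem aux_root (p : ℕ) [Fact p.Prime] (q : ℕ) (hpq : ¬ p ∣ q)
    (N : ℕ) (hN : 1 ≤ N) (θ : ℚ_[p]) (hθ : θ = (p : ℚ_[p]) ^ N) (x : ℚ_[p])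
    (h : x ^ 2 + (2 * θ - θ ^ 2 + 2 * q - 1) * x + q ^ 2 = 0) :
    ‖x‖ = 1 ∧ ‖θ * x + q‖ = 1 ∧ ‖x + θ + q - 1‖ = 1 := by
  have hqn : ‖(q : ℚ_[p])‖ = 1 := by
    have h1 := Padic.norm_int_le_one (p := p) (q : ℤ)
    have h2 := Padic.norm_intCast_lt_one_iff (p := p) (k := (q : ℤ))
    rw [Int.cast_natCast] at h1 h2
    refine le_antisymm h1 (not_lt.mp fun h3 => hpq ?_)
    exact_mod_cast h2.mp h3
  have hθn : ‖θ‖ < 1 := by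
    rw [hθ, norm_pow]
    exact pow_lt_one₀ (norm_nonneg _) Padic.norm_p_lt_one (by omega)
  have hb : ‖2 * θ - θ ^ 2 + 2 * q - 1‖ ≤ 1 := by
    have : (2 * θ - θ ^ 2 + 2 * q - 1) =
        ((2 * (p : ℤ) ^ N - ((p : ℤ) ^ N) ^ 2 + 2 * q - 1 : ℤ) : ℚ_[p]) := by
      rw [hθ]; push_cast; ring
    rw [this]; exact Padic.norm_int_le_one _
  generalize hbb : 2 * θ - θ ^ 2 + 2 * (q : ℚ_[p]) - 1 = b at h hb
  have hx1 : ‖x‖ ≤ 1 := by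
    by_contra! hlt
    have e : x ^ 2 = -(b * x + q ^ 2) := by linear_combination h
    have e2 := congrArg norm e
    rw [norm_neg, norm_pow] at e2
    have := Padic.nonarchimedean (b * x) ((q : ℚ_[p]) ^ 2)
    rw [← e2, norm_mul, norm_pow, hqn] at this
    rcases le_max_iff.mp this with h3 | h3 <;> nlinarith
  have hxb : ‖x + b‖ ≤ 1 := (Padic.nonarchimedean x b).trans (max_le hx1 hb)
  have hxn : ‖x‖ = 1 := by
    have e : x * (x + b) = -(q ^ 2) := by linear_combination h
    have e2 := congrArg norm e
    rw [norm_neg, norm_pow, norm_mul, hqn] at e2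
    nlinarith [norm_nonneg x, norm_nonneg (x + b)]
  have h2 : ‖θ * x + q‖ = 1 := by
    have hlt : ‖θ * x‖ < 1 := by rw [norm_mul, hxn, mul_one]; exact hθn
    rw [Padic.add_eq_max_of_ne (by rw [hqn]; exact hlt.ne), hqn]
    exact max_eq_right hlt.le
  refine ⟨hxn, h2, ?_⟩
  have e : x * (x + θ + q - 1) ^ 2 = (θ * x + q) ^ 2 := by
    subst hbb
    linear_combination (x - 1) * h
  have e2 := congrArg norm e
  rw [norm_mul, norm_pow, norm_pow, hxn, h2, one_mul, one_pow] at e2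
  exact (pow_eq_one_iff_of_nonneg (norm_nonneg _) two_ne_zero).mp e2

theorem stmt_7 (p : ℕ) [Fact p.Prime] (hp2 : p ≠ 2)
    (q : ℕ) (hq : 1 ≤ q) (hpq : ¬ p ∣ q)
    (N : ℕ) (hN : 1 ≤ N) (θ : ℚ_[p]) (hθ : θ = (p : ℚ_[p]) ^ N)
    (x₁ x₂ : ℚ_[p]) (hx : x₁ ≠ x₂)
    (h₁ : x₁ ^ 2 + (2 * θ - θ ^ 2 + 2 * q - 1) * x₁ + q ^ 2 = 0)
    (h₂ : x₂ ^ 2 + (2 * θ - θ ^ 2 + 2 * q - 1) * x₂ + q ^ 2 = 0) :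
    (‖x₁‖ = 1 ∧ ‖θ * x₁ + q‖ = 1 ∧ ‖x₁ + θ + q - 1‖ = 1) ∧
    (‖x₂‖ = 1 ∧ ‖θ * x₂ + q‖ = 1 ∧ ‖x₂ + θ + q - 1‖ = 1) := by
  exact ⟨aux_root p q hpq N hN θ hθ x₁ h₁, aux_root p q hpq N hN θ hθ x₂ h₂⟩
end

section
/- Let p be an odd prime, let q ≥ 2 be an integer divisible by p, let N ≥ 1 be an integer, set θ = p^N ∈ ℚ_p, and assume ‖θ‖_p ≤ ‖q‖_p². Let x₁ and x₂ be roots in ℚ_p of x² + (2θ − θ² + 2q − 1)x + q² = 0 with ‖x₁‖_p = ‖q‖_p² and ‖x₂‖_p = 1. Then, for the map f(x) = ((θx + q)/(x + θ + q − 1))², the norms of the derivative of f at its fixed points satisfy: ‖deriv f 1‖_p = ‖q‖_p⁻¹ > 1, ‖deriv f x₁‖_p = ‖q‖_p² < 1, and ‖deriv f x₂‖_p = ‖q‖_p⁻¹ > 1; in particular x₁ is an attractive fixed point and 1, x₂ are repelling fixed points. -/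
theorem aux_add {p : ℕ} [Fact p.Prime] {a b : ℚ_[p]} (h : ‖a‖ < ‖b‖) : ‖a + b‖ = ‖b‖ := by
  rw [Padic.add_eq_max_of_ne h.ne, max_eq_right h.le]

theorem stmt_8 (p : ℕ) [Fact p.Prime] (hp2 : p ≠ 2)
    (q : ℕ) (hq : 2 ≤ q) (hpq : p ∣ q)
    (N : ℕ) (hN : 1 ≤ N) (θ : ℚ_[p]) (hθ : θ = (p : ℚ_[p]) ^ N)
    (hθq : ‖θ‖ ≤ ‖(q : ℚ_[p])‖ ^ 2)
    (x₁ x₂ : ℚ_[p])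
    (h₁ : x₁ ^ 2 + (2 * θ - θ ^ 2 + 2 * q - 1) * x₁ + q ^ 2 = 0)
    (h₂ : x₂ ^ 2 + (2 * θ - θ ^ 2 + 2 * q - 1) * x₂ + q ^ 2 = 0)
    (hn₁ : ‖x₁‖ = ‖(q : ℚ_[p])‖ ^ 2) (hn₂ : ‖x₂‖ = 1)
    (f : ℚ_[p] → ℚ_[p])
    (hf : f = fun x => ((θ * x + q) / (x + θ + q - 1)) ^ 2) :
    (‖deriv f 1‖ = ‖(q : ℚ_[p])‖⁻¹ ∧ 1 < ‖deriv f 1‖) ∧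
    (‖deriv f x₁‖ = ‖(q : ℚ_[p])‖ ^ 2 ∧ ‖deriv f x₁‖ < 1) ∧
    (‖deriv f x₂‖ = ‖(q : ℚ_[p])‖⁻¹ ∧ 1 < ‖deriv f x₂‖) := by
  have hp : p.Prime := Fact.out
  have hq0 : (q : ℚ_[p]) ≠ 0 := by
    have : q ≠ 0 := by omega
    exact_mod_cast this
  have hQ0 : 0 < ‖(q : ℚ_[p])‖ := norm_pos_iff.mpr hq0
  have hQ1 : ‖(q : ℚ_[p])‖ < 1 := (Padic.norm_natCast_lt_one_iff).mpr hpq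
  have hQ2 : ‖(q : ℚ_[p])‖ ^ 2 < ‖(q : ℚ_[p])‖ := by nlinarith
  have hθ1 : ‖θ‖ < ‖(q : ℚ_[p])‖ := lt_of_le_of_lt hθq hQ2
  have h2 : ‖(2 : ℚ_[p])‖ = 1 := by
    have := (Padic.norm_natCast_eq_one_iff (p := p) (n := 2)).mpr
      ((Nat.coprime_primes hp Nat.prime_two).mpr hp2)
    exact_mod_cast this
  have hθq' : ‖θ + q‖ = ‖(q : ℚ_[p])‖ := aux_add hθ1
  have hm1 : ‖(-1 : ℚ_[p])‖ = 1 := by simp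
  have hθm : ‖θ - 1‖ = 1 := by
    rw [sub_eq_add_neg, aux_add (by rw [hm1]; linarith), hm1]
  have hnum : ∀ x : ℚ_[p], ‖x‖ ≤ 1 → ‖θ * x + q‖ = ‖(q : ℚ_[p])‖ := by
    intro x hx
    apply aux_add
    rw [norm_mul]
    nlinarith [norm_nonneg θ, norm_nonneg x]
  have key : ∀ x : ℚ_[p], ‖x‖ ≤ 1 → x + θ + q - 1 ≠ 0 →
      ‖deriv f x‖ = ‖(q : ℚ_[p])‖ ^ 2 / ‖x + θ + q - 1‖ ^ 3 := by
    intro x hx hD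
    have h1 : HasDerivAt (fun x : ℚ_[p] => θ * x + q) θ x := by
      simpa using ((hasDerivAt_id x).const_mul θ).add_const (q : ℚ_[p])
    have h3 : HasDerivAt (fun x : ℚ_[p] => x + θ + q - 1) 1 x := by
      simpa using (((hasDerivAt_id x).add_const θ).add_const (q : ℚ_[p])).sub_const 1
    have h4 := ((h1.div h3 hD).pow 2).deriv
    have h5 : deriv f x = 2 * (θ * x + q) * ((θ - 1) * (θ + q)) / (x + θ + q - 1) ^ 3 := by
      rw [hf]
      refine Eq.trans h4 ?_
      simp only [Pi.div_apply, Nat.add_one_sub_one, show (2 - 1 : ℕ) = 1 from rfl, pow_one, Nat.cast_ofNat]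
      field_simp
      ring
    rw [h5, norm_div, norm_mul, norm_mul, norm_mul, norm_pow, h2, hnum x hx, hθm, hθq']
    ring
  have hinv : 1 < ‖(q : ℚ_[p])‖⁻¹ := (one_lt_inv₀ hQ0).mpr hQ1
  have fin : ∀ x : ℚ_[p], ‖x‖ ≤ 1 → ‖x + θ + q - 1‖ = ‖(q : ℚ_[p])‖ →
      ‖deriv f x‖ = ‖(q : ℚ_[p])‖⁻¹ ∧ 1 < ‖deriv f x‖ := by
    intro x hx hD
    have e : ‖deriv f x‖ = ‖(q : ℚ_[p])‖⁻¹ := by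
      rw [key x hx (by rw [← norm_pos_iff, hD]; exact hQ0), hD]
      field_simp
    exact ⟨e, e ▸ hinv⟩
  refine ⟨fin 1 (by simp) ?_, ?_, fin x₂ hn₂.le ?_⟩
  · rw [← hθq']; congr 1; ring
  · have hD : ‖x₁ + θ + q - 1‖ = 1 := by
      have h6 : ‖x₁ + (θ + q)‖ < 1 :=
        lt_of_le_of_lt (Padic.nonarchimedean _ _) (max_lt (by rw [hn₁]; linarith) (by rw [hθq']; exact hQ1))
      have : x₁ + θ + q - 1 = (x₁ + (θ + q)) + (-1) := by ring
      rw [this, aux_add (by rw [hm1]; exact h6), hm1]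
    have e := key x₁ (by rw [hn₁]; linarith) (by rw [← norm_pos_iff, hD]; exact one_pos)
    rw [hD, one_pow, div_one] at e
    exact ⟨e, by rw [e]; linarith⟩
  · have h7 : x₂ * (x₂ + θ + q - 1) ^ 2 = (θ * x₂ + q) ^ 2 := by
      linear_combination (x₂ - 1) * h₂
    have h8 := congrArg norm h7
    rw [norm_mul, norm_pow, norm_pow, hn₂, one_mul, hnum x₂ hn₂.le] at h8
    exact (pow_left_inj₀ (norm_nonneg _) (norm_nonneg _) two_ne_zero).mp h8
end

section
/- Let p be an odd prime, let q ≥ 2 be an integer divisible by p, let N ≥ 1 be an integer, set θ = p^N ∈ ℚ_p, and assume ‖θ‖_p ≤ ‖q‖_p². Let x₁ be a root in ℚ_p of x² + (2θ − θ² + 2q − 1)x + q² = 0 with ‖x₁‖_p = ‖q‖_p². Then for every x ∈ ℚ_p such that either ‖x‖_p ≠ 1, or ‖x‖_p = 1 and ‖x − 1‖_p > ‖q‖_p, the sequence of iterates f^[n](x) converges to x₁ as n → ∞ (in the topology of ℚ_p), where f(x) = ((θx + q)/(x + θ + q − 1))². -/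
theorem stmt_10 (p : ℕ) [Fact p.Prime] (hp2 : p ≠ 2)
    (q : ℕ) (hq : 2 ≤ q) (hpq : p ∣ q)
    (N : ℕ) (hN : 1 ≤ N) (θ : ℚ_[p]) (hθ : θ = (p : ℚ_[p]) ^ N)
    (hθq : ‖θ‖ ≤ ‖(q : ℚ_[p])‖ ^ 2)
    (x₁ : ℚ_[p])
    (h₁ : x₁ ^ 2 + (2 * θ - θ ^ 2 + 2 * q - 1) * x₁ + q ^ 2 = 0)
    (hn₁ : ‖x₁‖ = ‖(q : ℚ_[p])‖ ^ 2)
    (f : ℚ_[p] → ℚ_[p])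
    (hf : f = fun x => ((θ * x + q) / (x + θ + q - 1)) ^ 2)
    (x : ℚ_[p])
    (hx : ‖x‖ ≠ 1 ∨ (‖x‖ = 1 ∧ ‖(q : ℚ_[p])‖ < ‖x - 1‖)) :
    Filter.Tendsto (fun n => f^[n] x) Filter.atTop (nhds x₁) := by
  have hq0 : (q : ℚ_[p]) ≠ 0 := by exact_mod_cast (by omega : q ≠ 0)
  have hQ0 : 0 < ‖(q : ℚ_[p])‖ := norm_pos_iff.mpr hq0
  have hQ1 : ‖(q : ℚ_[p])‖ < 1 := by
    exact Padic.norm_natCast_lt_one_iff.2 hpq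
  have hTQ : ‖θ‖ < ‖(q : ℚ_[p])‖ := by nlinarith
  have hqθ : ‖(q : ℚ_[p]) + θ‖ ≤ ‖(q : ℚ_[p])‖ :=
    (Padic.nonarchimedean _ _).trans (max_le le_rfl hTQ.le)
  have hx1lt : ‖x₁‖ < 1 := by rw [hn₁]; nlinarith
  have norm_sub_one : ∀ y : ℚ_[p], ‖y‖ ≠ 1 → 1 ≤ ‖y - 1‖ := by
    intro y hy
    have h := Padic.add_eq_max_of_ne (p := p) (q := y) (r := -1) (by simpa using hy)
    rw [← sub_eq_add_neg] at h
    rw [h]; simp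
  have hden : ∀ y : ℚ_[p], ‖(q : ℚ_[p])‖ < ‖y - 1‖ → ‖y + θ + q - 1‖ = ‖y - 1‖ := by
    intro y hy
    have h := Padic.add_eq_max_of_ne (p := p) (q := y - 1) (r := q + θ)
      (by intro h; linarith)
    rw [show y + θ + q - 1 = (y - 1) + (q + θ) by ring, h]
    exact max_eq_left (by linarith)
  have hg : ∀ y : ℚ_[p], ‖(q : ℚ_[p])‖ < ‖y - 1‖ →
      ‖(θ * y + q) / (y + θ + q - 1)‖ < 1 := by
    intro y hy
    rw [norm_div, hden y hy, div_lt_one (by linarith),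
      show θ * y + q = θ * (y - 1) + (q + θ) by ring]
    refine (Padic.nonarchimedean _ _).trans_lt (max_lt ?_ (by linarith))
    rw [norm_mul]
    nlinarith
  have hflt : ∀ y : ℚ_[p], ‖(q : ℚ_[p])‖ < ‖y - 1‖ → ‖f y‖ < 1 := by
    intro y hy
    rw [hf]
    simp only [norm_pow]
    exact pow_lt_one₀ (norm_nonneg _) (hg y hy) (by norm_num)
  have hsmall : ∀ y : ℚ_[p], ‖y‖ < 1 → 1 ≤ ‖y - 1‖ := fun y hy => norm_sub_one y hy.ne
  have hd1 : ∀ y : ℚ_[p], ‖y‖ < 1 → ‖y + θ + q - 1‖ = 1 := by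
    intro y hy
    rw [hden y (by linarith [hsmall y hy])]
    refine le_antisymm ?_ (hsmall y hy)
    rw [sub_eq_add_neg]
    exact (Padic.nonarchimedean _ _).trans (max_le hy.le (by simp))
  have hfix : f x₁ = x₁ := by
    have h1 := hd1 x₁ hx1lt
    have h0 : x₁ + θ + q - 1 ≠ 0 := by
      intro h; rw [h] at h1; simp at h1
    rw [hf]
    simp only [div_pow]
    rw [div_eq_iff (pow_ne_zero _ h0)]
    linear_combination (-(x₁ - 1)) * h₁
  have hc : ∀ y : ℚ_[p], ‖y‖ < 1 → ‖f y - x₁‖ ≤ ‖(q : ℚ_[p])‖ * ‖y - x₁‖ := by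
    intro y hy
    have hy1 := hd1 y hy
    have hx1 := hd1 x₁ hx1lt
    have hy0 : y + θ + q - 1 ≠ 0 := by
      intro h; rw [h] at hy1; simp at hy1
    have hx0 : x₁ + θ + q - 1 ≠ 0 := by
      intro h; rw [h] at hx1; simp at hx1
    have gy := hg y (by linarith [hsmall y hy])
    have gx := hg x₁ (by linarith [hsmall x₁ hx1lt])
    have e1 : (θ * y + q) / (y + θ + q - 1) - (θ * x₁ + q) / (x₁ + θ + q - 1)
        = (θ * (θ + q - 1) - q) * (y - x₁) / ((y + θ + q - 1) * (x₁ + θ + q - 1)) := by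
      rw [div_sub_div _ _ hy0 hx0]
      congr 1
      ring
    have e2 : ‖θ * (θ + q - 1) - q‖ ≤ ‖(q : ℚ_[p])‖ := by
      have h := hd1 0 (by simp)
      rw [zero_add] at h
      rw [sub_eq_add_neg]
      refine (Padic.nonarchimedean _ _).trans (max_le ?_ (by simp))
      rw [norm_mul, h, mul_one]; exact hTQ.le
    have e3 : f y - x₁ = ((θ * y + q) / (y + θ + q - 1) - (θ * x₁ + q) / (x₁ + θ + q - 1)) *
        ((θ * y + q) / (y + θ + q - 1) + (θ * x₁ + q) / (x₁ + θ + q - 1)) := by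
      conv_lhs => rw [← hfix]
      rw [hf]; ring
    rw [e3, norm_mul, e1, norm_div, norm_mul, norm_mul, hy1, hx1, mul_one, div_one]
    have e4 : ‖(θ * y + q) / (y + θ + q - 1) + (θ * x₁ + q) / (x₁ + θ + q - 1)‖ ≤ 1 :=
      (Padic.nonarchimedean _ _).trans (max_le gy.le gx.le)
    calc _ ≤ ‖(q : ℚ_[p])‖ * ‖y - x₁‖ * 1 := by gcongr
      _ = _ := mul_one _
  have hx' : ‖(q : ℚ_[p])‖ < ‖x - 1‖ := by
    rcases hx with h | h
    · linarith [norm_sub_one x h]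
    · exact h.2
  have key : ∀ n : ℕ, ‖f^[n] (f x)‖ < 1 ∧
      ‖f^[n] (f x) - x₁‖ ≤ ‖(q : ℚ_[p])‖ ^ n * ‖f x - x₁‖ := by
    intro n
    induction n with
    | zero => simpa using hflt x hx'
    | succ n ih =>
      rw [Function.iterate_succ_apply']
      refine ⟨hflt _ (by linarith [hsmall _ ih.1]), (hc _ ih.1).trans ?_⟩
      rw [pow_succ', mul_assoc]
      exact mul_le_mul_of_nonneg_left ih.2 hQ0.le
  rw [← Filter.tendsto_add_atTop_iff_nat 1]
  simp only [Function.iterate_succ_apply]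
  rw [tendsto_iff_norm_sub_tendsto_zero]
  refine squeeze_zero (fun _ => norm_nonneg _) (fun n => (key n).2) ?_
  simpa using (tendsto_pow_atTop_nhds_zero_of_lt_one hQ0.le hQ1).mul_const ‖f x - x₁‖
end

section
/- Let p be an odd prime, let q ≥ 2 be an integer divisible by p, let N ≥ 1 be an integer, set θ = p^N ∈ ℚ_p, and assume ‖θ‖_p ≤ ‖q‖_p². Define g : ℚ_p → ℚ_p by g(x) = (θx + q)/(x + θ + q − 1). Then: (i) for every x ∈ ℚ_p with ‖x‖_p ≠ 1 one has ‖g(x)‖_p ≤ max{‖q‖_p, ‖θ‖_p} (in particular ‖g(x)‖_p < 1); (ii) for every x ∈ ℚ_p, if ‖g(x)‖_p > 1 then ‖x‖_p = 1. -/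
theorem stmt_11 (p : ℕ) [Fact p.Prime] (hp2 : p ≠ 2)
    (q : ℕ) (hq : 2 ≤ q) (hpq : p ∣ q)
    (N : ℕ) (hN : 1 ≤ N) (θ : ℚ_[p]) (hθ : θ = (p : ℚ_[p]) ^ N)
    (hθq : ‖θ‖ ≤ ‖(q : ℚ_[p])‖ ^ 2)
    (g : ℚ_[p] → ℚ_[p])
    (hg : g = fun x => (θ * x + q) / (x + θ + q - 1)) :
    (∀ x : ℚ_[p], ‖x‖ ≠ 1 → ‖g x‖ ≤ max ‖(q : ℚ_[p])‖ ‖θ‖ ∧ ‖g x‖ < 1) ∧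
    (∀ x : ℚ_[p], 1 < ‖g x‖ → ‖x‖ = 1) := by
  have hq1 : ‖(q : ℚ_[p])‖ < 1 := by
    exact Padic.norm_natCast_lt_one_iff.2 hpq
  have hθ1 : ‖θ‖ < 1 := by nlinarith [norm_nonneg (q : ℚ_[p])]
  have hs : ‖θ + q‖ < 1 := lt_of_le_of_lt (Padic.nonarchimedean _ _) (max_lt hθ1 hq1)
  have hm1 : ‖(-1 : ℚ_[p])‖ = 1 := by simp
  have hc : ‖θ + q + (-1)‖ = 1 := by
    rw [Padic.add_eq_max_of_ne (by rw [hm1]; exact hs.ne), hm1]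
    exact max_eq_right hs.le
  have key : ∀ x : ℚ_[p], ‖x‖ ≠ 1 → ‖g x‖ ≤ max ‖(q : ℚ_[p])‖ ‖θ‖ ∧ ‖g x‖ < 1 := by
    intro x hx
    have hd : ‖x + θ + q - 1‖ = max ‖x‖ 1 := by
      have : x + θ + q - 1 = x + (θ + q + (-1)) := by ring
      rw [this, Padic.add_eq_max_of_ne (by rw [hc]; exact hx), hc]
    have hpos : 0 < max ‖x‖ 1 := lt_max_of_lt_right one_pos
    have h1 : ‖g x‖ ≤ max ‖(q : ℚ_[p])‖ ‖θ‖ := by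
      rw [hg]
      simp only [norm_div]
      rw [hd, div_le_iff₀ hpos]
      refine (Padic.nonarchimedean _ _).trans (max_le ?_ ?_)
      · rw [norm_mul]
        exact mul_le_mul (le_max_right _ _) (le_max_left _ _) (norm_nonneg _)
          ((norm_nonneg _).trans (le_max_left _ _))
      · calc ‖(q : ℚ_[p])‖ = ‖(q : ℚ_[p])‖ * 1 := (mul_one _).symm
          _ ≤ _ := mul_le_mul (le_max_left _ _) (le_max_right _ _) zero_le_one
            ((norm_nonneg _).trans (le_max_left _ _))
    exact ⟨h1, h1.trans_lt (max_lt hq1 hθ1)⟩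
  refine ⟨key, fun x h => ?_⟩
  by_contra hx
  exact absurd (key x hx).2 h.not_gt
end

section
/- Let p be an odd prime, let q ≥ 2 be an integer divisible by p, let N ≥ 1 be an integer, set θ = p^N ∈ ℚ_p, and assume ‖θ‖_p ≤ ‖q‖_p². Let x₁ be a root in ℚ_p of x² + (2θ − θ² + 2q − 1)x + q² = 0 with ‖x₁‖_p = ‖q‖_p². Let g(x) = (θx + q)/(x + θ + q − 1), and let h be a function assigning to every finite word w over the alphabet {0,1} an element h(w) ∈ ℚ_p such that h(w) = g(h(w·0)) · g(h(w·1)) for every word w (where w·i denotes w with the letter i appended). If ‖h(w)‖_p ≠ 1 for every word w, then h(w) = x₁ for every word w. -/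
theorem aux_norm_add {p : ℕ} [Fact p.Prime] {y z : ℚ_[p]} (hyz : ‖y‖ < ‖z‖) : ‖y + z‖ = ‖z‖ := by
  rw [IsUltrametricDist.norm_add_eq_max_of_norm_ne_norm hyz.ne, max_eq_right hyz.le]

theorem aux_add_le {p : ℕ} [Fact p.Prime] {y z : ℚ_[p]} {r : ℝ} (h1 : ‖y‖ ≤ r) (h2 : ‖z‖ ≤ r) :
    ‖y + z‖ ≤ r :=
  (IsUltrametricDist.norm_add_le_max y z).trans (max_le h1 h2)

theorem stmt_12 (p : ℕ) [Fact p.Prime] (hp2 : p ≠ 2)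
    (q : ℕ) (hq : 2 ≤ q) (hpq : p ∣ q)
    (N : ℕ) (hN : 1 ≤ N) (θ : ℚ_[p]) (hθ : θ = (p : ℚ_[p]) ^ N)
    (hθq : ‖θ‖ ≤ ‖(q : ℚ_[p])‖ ^ 2)
    (x₁ : ℚ_[p])
    (h₁ : x₁ ^ 2 + (2 * θ - θ ^ 2 + 2 * q - 1) * x₁ + q ^ 2 = 0)
    (hn₁ : ‖x₁‖ = ‖(q : ℚ_[p])‖ ^ 2)
    (g : ℚ_[p] → ℚ_[p])
    (hg : g = fun x => (θ * x + q) / (x + θ + q - 1))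
    (h : List (Fin 2) → ℚ_[p])
    (hrec : ∀ w : List (Fin 2), h w = g (h (w ++ [0])) * g (h (w ++ [1])))
    (hnorm : ∀ w : List (Fin 2), ‖h w‖ ≠ 1) :
    ∀ w : List (Fin 2), h w = x₁ := by
  have ha1 : ‖(q : ℚ_[p])‖ < 1 := by
    exact Padic.norm_natCast_lt_one_iff.2 hpq
  have ha0 : 0 ≤ ‖(q : ℚ_[p])‖ := norm_nonneg _
  generalize hQ : (q : ℚ_[p]) = Q at *
  have hθQ : ‖θ‖ ≤ ‖Q‖ := hθq.trans (by nlinarith)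
  have hθ1 : ‖θ‖ < 1 := hθQ.trans_lt ha1
  have hθ0 := norm_nonneg θ
  have hx1 : ‖x₁‖ < 1 := by rw [hn₁]; nlinarith
  have hD : ∀ x : ℚ_[p], ‖x‖ < 1 → ‖x + θ + Q - 1‖ = 1 := by
    intro x hx
    have h2 : ‖x + θ + Q‖ < ‖(-1 : ℚ_[p])‖ := by
      rw [norm_neg, norm_one]
      refine (IsUltrametricDist.norm_add_le_max _ _).trans_lt (max_lt ?_ ha1)
      exact (IsUltrametricDist.norm_add_le_max _ _).trans_lt (max_lt hx hθ1)
    rw [sub_eq_add_neg, aux_norm_add h2, norm_neg, norm_one]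
  have hgQ : ∀ x : ℚ_[p], ‖x‖ ≠ 1 → ‖g x‖ ≤ ‖Q‖ := by
    intro x hx
    have hx0 := norm_nonneg x
    rw [hg]
    simp only [norm_div]
    rcases lt_or_gt_of_ne hx with hx | hx
    · rw [hD x hx, div_one]
      refine aux_add_le ?_ le_rfl
      rw [norm_mul]; nlinarith
    · have h3 : ‖x + θ + Q - 1‖ = ‖x‖ := by
        have e : x + θ + Q - 1 = (θ + Q - 1) + x := by ring
        rw [e]
        apply aux_norm_add
        refine lt_of_le_of_lt ?_ hx
        rw [sub_eq_add_neg]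
        exact aux_add_le (aux_add_le hθ1.le ha1.le) (by simp)
      rw [h3, div_le_iff₀ (by linarith)]
      refine aux_add_le ?_ ?_
      · rw [norm_mul]; nlinarith
      · nlinarith
  have hlt : ∀ w, ‖h w‖ < 1 := by
    intro w
    rw [hrec, norm_mul]
    have := hgQ _ (hnorm (w ++ [0]))
    have := hgQ _ (hnorm (w ++ [1]))
    have := norm_nonneg (g (h (w ++ [0])))
    have := norm_nonneg (g (h (w ++ [1])))
    nlinarith
  have hlip : ∀ x : ℚ_[p], ‖x‖ < 1 → ‖g x - g x₁‖ ≤ ‖Q‖ * ‖x - x₁‖ := by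
    intro x hx
    have d1 := hD x hx
    have d2 := hD x₁ hx1
    have n1 : x + θ + Q - 1 ≠ 0 := by intro e; rw [e] at d1; simp at d1
    have n2 : x₁ + θ + Q - 1 ≠ 0 := by intro e; rw [e] at d2; simp at d2
    have e : g x - g x₁ = (θ * (θ + Q - 1) + -Q) * (x - x₁) /
        ((x + θ + Q - 1) * (x₁ + θ + Q - 1)) := by
      rw [hg]
      simp only
      rw [div_sub_div _ _ n1 n2]
      congr 1
      ring
    rw [e, norm_div, norm_mul, norm_mul, d1, d2, mul_one, div_one]
    refine mul_le_mul_of_nonneg_right ?_ (norm_nonneg _)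
    refine aux_add_le ?_ (by simp)
    have : ‖θ + Q - 1‖ ≤ 1 := by
      rw [sub_eq_add_neg]
      exact aux_add_le (aux_add_le hθ1.le ha1.le) (by simp)
    rw [norm_mul]; nlinarith
  have hfix : x₁ = g x₁ * g x₁ := by
    have d2 := hD x₁ hx1
    have n2 : x₁ + θ + Q - 1 ≠ 0 := by intro e; rw [e] at d2; simp at d2
    rw [hg]
    simp only
    rw [div_mul_div_comm, eq_div_iff (mul_ne_zero n2 n2)]
    linear_combination (x₁ - 1) * h₁
  have key : ∀ n : ℕ, ∀ w, ‖h w - x₁‖ ≤ ‖Q‖ ^ n := by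
    intro n
    induction n with
    | zero =>
      intro w
      rw [pow_zero, sub_eq_add_neg]
      exact aux_add_le (hlt w).le (by rw [norm_neg]; exact hx1.le)
    | succ n ih =>
      intro w
      have b : ∀ v, ‖g (h v) - g x₁‖ ≤ ‖Q‖ ^ (n+1) := fun v => by
        refine (hlip _ (hlt v)).trans ?_
        rw [pow_succ']
        exact mul_le_mul_of_nonneg_left (ih v) ha0
      have e : h w - x₁ = (g (h (w ++ [0])) - g x₁) * g (h (w ++ [1]))
          + g x₁ * (g (h (w ++ [1])) - g x₁) := by
        rw [hrec w]; nth_rewrite 1 [hfix]; ring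
      rw [e]
      refine aux_add_le ?_ ?_
      · rw [norm_mul]
        exact (mul_le_of_le_one_right (norm_nonneg _)
          ((hgQ _ (hnorm _)).trans ha1.le)).trans (b _)
      · rw [norm_mul]
        exact (mul_le_of_le_one_left (norm_nonneg _)
          ((hgQ _ hx1.ne).trans ha1.le)).trans (b _)
  intro w
  have := ge_of_tendsto' (tendsto_pow_atTop_nhds_zero_of_lt_one ha0 ha1) (fun n => key n w)
  exact sub_eq_zero.1 (norm_le_zero_iff.1 this)
end

section
/- Let p be an odd prime, let q ≥ 1 be an integer, let M ≥ 1 be an integer, and set θ = p^{−M} ∈ ℚ_p, so ‖θ‖_p > 1. Let x₁ and x₂ be roots in ℚ_p of x² + (2θ − θ² + 2q − 1)x + q² = 0 with ‖x₁‖_p = ‖θ‖_p² and ‖x₂‖_p = (‖q‖_p/‖θ‖_p)². Then, for the map f(x) = ((θx + q)/(x + θ + q − 1))², one has ‖deriv f 1‖_p = 1, ‖deriv f x₁‖_p = ‖θ‖_p⁻¹ < 1, and ‖deriv f x₂‖_p = ‖q‖_p/‖θ‖_p < 1; in particular the fixed point 1 is neutral and the fixed points x₁, x₂ are attractive. -/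
theorem aux_dom {p : ℕ} [Fact p.Prime] {a b : ℚ_[p]} (h : ‖b‖ < ‖a‖) : ‖a + b‖ = ‖a‖ := by
  rw [IsUltrametricDist.norm_add_eq_max_of_norm_ne_norm h.ne', max_eq_left h.le]

theorem aux_deriv {p : ℕ} [Fact p.Prime] (θ q x : ℚ_[p]) (hD : x + θ + q - 1 ≠ 0) :
    deriv (fun x => ((θ * x + q) / (x + θ + q - 1)) ^ 2) x =
      2 * (θ * x + q) * ((θ - 1) * (θ + q)) / (x + θ + q - 1) ^ 3 := by
  have hN : HasDerivAt (fun x : ℚ_[p] => θ * x + q) θ x := by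
    simpa using ((hasDerivAt_id x).const_mul θ).add_const q
  have hDd : HasDerivAt (fun x : ℚ_[p] => x + θ + q - 1) 1 x := by
    simpa using (((hasDerivAt_id x).add_const θ).add_const q).sub_const 1
  have h := ((hN.fun_div hDd hD).fun_pow 2).deriv
  rw [h, show (2 - 1 : ℕ) = 1 from rfl, pow_one]
  field_simp
  push_cast
  ring

theorem stmt_14 (p : ℕ) [Fact p.Prime] (hp2 : p ≠ 2)
    (q : ℕ) (hq : 1 ≤ q) (M : ℕ) (hM : 1 ≤ M)
    (θ : ℚ_[p]) (hθ : θ = ((p : ℚ_[p]) ^ M)⁻¹)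
    (x₁ x₂ : ℚ_[p])
    (h₁ : x₁ ^ 2 + (2 * θ - θ ^ 2 + 2 * q - 1) * x₁ + q ^ 2 = 0)
    (h₂ : x₂ ^ 2 + (2 * θ - θ ^ 2 + 2 * q - 1) * x₂ + q ^ 2 = 0)
    (hn₁ : ‖x₁‖ = ‖θ‖ ^ 2) (hn₂ : ‖x₂‖ = (‖(q : ℚ_[p])‖ / ‖θ‖) ^ 2)
    (f : ℚ_[p] → ℚ_[p])
    (hf : f = fun x => ((θ * x + q) / (x + θ + q - 1)) ^ 2) :
    ‖deriv f 1‖ = 1 ∧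
    (‖deriv f x₁‖ = ‖θ‖⁻¹ ∧ ‖deriv f x₁‖ < 1) ∧
    (‖deriv f x₂‖ = ‖(q : ℚ_[p])‖ / ‖θ‖ ∧ ‖deriv f x₂‖ < 1) := by
  have hpp : p.Prime := Fact.out
  have hT : 1 < ‖θ‖ := by
    rw [hθ, norm_inv, norm_pow]
    have h0 : 0 < ‖(p : ℚ_[p])‖ := norm_pos_iff.2 (by exact_mod_cast hpp.ne_zero)
    exact (one_lt_inv₀ (pow_pos h0 M)).2
      (pow_lt_one₀ h0.le Padic.norm_p_lt_one (by omega))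
  have h2 : ‖(2 : ℚ_[p])‖ = 1 := by
    have : ‖((2 : ℕ) : ℚ_[p])‖ = 1 := by
      rw [Padic.norm_natCast_eq_one_iff]
      exact (Nat.coprime_primes hpp Nat.prime_two).2 hp2
    exact_mod_cast this
  have hQ1 : ‖(q : ℚ_[p])‖ ≤ 1 := by
    simpa using Padic.norm_int_le_one (p := p) (q : ℤ)
  have hqm : ‖(q : ℚ_[p]) - 1‖ ≤ 1 := by
    have := Padic.norm_int_le_one (p := p) ((q : ℤ) - 1)
    push_cast at this
    exact this
  have hQ0 : 0 < ‖(q : ℚ_[p])‖ := norm_pos_iff.2 (by exact_mod_cast (by omega : q ≠ 0))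
  have hT0 : 0 < ‖θ‖ := by linarith
  have ha : ‖θ - 1‖ = ‖θ‖ := by
    rw [sub_eq_add_neg]; exact aux_dom (by simpa using hT)
  have hb : ‖θ + q‖ = ‖θ‖ := aux_dom (by linarith)
  have hc : ‖θ + ((q : ℚ_[p]) - 1)‖ = ‖θ‖ := aux_dom (by linarith)
  -- denominators
  have hD1 : ‖(1 : ℚ_[p]) + θ + q - 1‖ = ‖θ‖ := by
    rw [show (1 : ℚ_[p]) + θ + q - 1 = θ + q by ring, hb]
  have hDx1 : ‖x₁ + θ + q - 1‖ = ‖θ‖ ^ 2 := by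
    rw [show x₁ + θ + q - 1 = x₁ + (θ + ((q : ℚ_[p]) - 1)) by ring, ← hn₁]
    exact aux_dom (by rw [hc, hn₁]; nlinarith)
  have hr : ‖(q : ℚ_[p])‖ / ‖θ‖ < 1 := by rw [div_lt_one hT0]; linarith
  have hr0 : 0 < ‖(q : ℚ_[p])‖ / ‖θ‖ := div_pos hQ0 hT0
  have hDx2 : ‖x₂ + θ + q - 1‖ = ‖θ‖ := by
    rw [show x₂ + θ + q - 1 = (θ + ((q : ℚ_[p]) - 1)) + x₂ by ring, ← hc]
    exact aux_dom (by rw [hc, hn₂]; nlinarith)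
  have hN1 : ‖θ * x₁ + q‖ = ‖θ‖ ^ 3 := by
    have e : ‖θ * x₁‖ = ‖θ‖ ^ 3 := by rw [norm_mul, hn₁]; ring
    rw [← e]
    refine aux_dom ?_
    rw [e]
    exact hQ1.trans_lt (one_lt_pow₀ hT (by norm_num))
  have hN2 : ‖θ * x₂ + q‖ = ‖(q : ℚ_[p])‖ := by
    rw [add_comm]
    refine aux_dom ?_
    have e : ‖θ * x₂‖ = ‖(q : ℚ_[p])‖ * (‖(q : ℚ_[p])‖ / ‖θ‖) := by
      rw [norm_mul, hn₂]; field_simp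
    rw [e]
    nlinarith
  have hne : ∀ x : ℚ_[p], 0 < ‖x‖ → x ≠ 0 := fun x hx => norm_pos_iff.1 hx
  have e1 : ‖deriv f 1‖ = 1 := by
    rw [hf, aux_deriv θ q 1 (hne _ (by rw [hD1]; exact hT0)), norm_div, norm_pow, hD1]
    simp only [norm_mul, h2, ha, hb, mul_one]
    field_simp
  have e2 : ‖deriv f x₁‖ = ‖θ‖⁻¹ := by
    rw [hf, aux_deriv θ q x₁ (hne _ (by rw [hDx1]; positivity)), norm_div, norm_pow, hDx1]
    simp only [norm_mul, h2, ha, hb, hN1]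
    field_simp
  have e3 : ‖deriv f x₂‖ = ‖(q : ℚ_[p])‖ / ‖θ‖ := by
    rw [hf, aux_deriv θ q x₂ (hne _ (by rw [hDx2]; exact hT0)), norm_div, norm_pow, hDx2]
    simp only [norm_mul, h2, ha, hb, hN2]
    field_simp
  exact ⟨e1, ⟨e2, e2 ▸ inv_lt_one_of_one_lt₀ hT⟩, ⟨e3, e3 ▸ hr⟩⟩
end

section
/- Let p be an odd prime, let q ≥ 1 be an integer, let M ≥ 1 be an integer, and set θ = p^{−M} ∈ ℚ_p, so ‖θ‖_p > 1. Let f(x) = ((θx + q)/(x + θ + q − 1))², and let x₂ be a root in ℚ_p of x² + (2θ − θ² + 2q − 1)x + q² = 0 with ‖x₂‖_p = (‖q‖_p/‖θ‖_p)². Then: (i) the unit sphere is invariant under f, i.e. for every x ∈ ℚ_p with ‖x‖_p = 1 one has ‖f(x)‖_p = 1; (ii) for every x ∈ ℚ_p with ‖x‖_p < 1, the sequence of iterates f^[n](x) converges to x₂ as n → ∞ (in the topology of ℚ_p). -/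
theorem stmt_17 (p : ℕ) [Fact p.Prime] (hp2 : p ≠ 2)
    (q : ℕ) (hq : 1 ≤ q) (M : ℕ) (hM : 1 ≤ M)
    (θ : ℚ_[p]) (hθ : θ = ((p : ℚ_[p]) ^ M)⁻¹)
    (f : ℚ_[p] → ℚ_[p])
    (hf : f = fun x => ((θ * x + q) / (x + θ + q - 1)) ^ 2)
    (x₂ : ℚ_[p])
    (h₂ : x₂ ^ 2 + (2 * θ - θ ^ 2 + 2 * q - 1) * x₂ + q ^ 2 = 0)
    (hn₂ : ‖x₂‖ = (‖(q : ℚ_[p])‖ / ‖θ‖) ^ 2) :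
    (∀ x : ℚ_[p], ‖x‖ = 1 → ‖f x‖ = 1) ∧
    (∀ x : ℚ_[p], ‖x‖ < 1 →
      Filter.Tendsto (fun n => f^[n] x) Filter.atTop (nhds x₂)) := by
  have hpr : (1:ℝ) < p := by exact_mod_cast (Fact.out : p.Prime).one_lt
  have hT : 1 < ‖θ‖ := by
    rw [hθ, norm_inv, norm_pow, Padic.norm_p, inv_pow, inv_inv]
    exact one_lt_pow₀ hpr (by omega)
  have hT0 : 0 < ‖θ‖ := by linarith
  have hqn : ‖(q : ℚ_[p])‖ ≤ 1 := by simpa using Padic.norm_int_le_one (p := p) (q : ℤ)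
  have dom : ∀ a b : ℚ_[p], ‖b‖ < ‖a‖ → ‖a + b‖ = ‖a‖ := by
    intro a b h
    rw [Padic.add_eq_max_of_ne h.ne', max_eq_left h.le]
  have add_le : ∀ (a b : ℚ_[p]) (c : ℝ), ‖a‖ ≤ c → ‖b‖ ≤ c → ‖a + b‖ ≤ c := by
    intro a b c h1 h2
    exact (Padic.nonarchimedean a b).trans (max_le h1 h2)
  have hm1 : ‖(-1 : ℚ_[p])‖ ≤ 1 := by simp
  have hD : ∀ x : ℚ_[p], ‖x‖ ≤ 1 → ‖x + θ + q - 1‖ = ‖θ‖ := by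
    intro x hx
    have e : x + θ + q - 1 = θ + (x + q + -1) := by ring
    rw [e]
    exact dom _ _ ((add_le _ _ 1 (add_le _ _ 1 hx hqn) hm1).trans_lt hT)
  have hD0 : ∀ x : ℚ_[p], ‖x‖ ≤ 1 → x + θ + q - 1 ≠ 0 := by
    intro x hx h
    have := hD x hx
    rw [h, norm_zero] at this
    linarith
  have hfx : ∀ x, f x = ((θ * x + q) / (x + θ + q - 1)) ^ 2 := fun x => by rw [hf]
  refine ⟨?_, ?_⟩
  · intro x hx
    have hN : ‖θ * x + q‖ = ‖θ‖ := by
      rw [dom, norm_mul, hx, mul_one]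
      rw [norm_mul, hx, mul_one]
      linarith
    rw [hfx, norm_pow, norm_div, hN, hD x hx.le, div_self hT0.ne', one_pow]
  · intro x hx
    obtain ⟨r, hr⟩ : ∃ r, r = max ‖x‖ ‖θ‖⁻¹ := ⟨_, rfl⟩
    have hTi : ‖θ‖⁻¹ < 1 := inv_lt_one_of_one_lt₀ hT
    have hTi0 : 0 < ‖θ‖⁻¹ := inv_pos.mpr hT0
    have hr1 : r < 1 := by rw [hr]; exact max_lt hx hTi
    have hrx : ‖x‖ ≤ r := by rw [hr]; exact le_max_left _ _
    have hrT : ‖θ‖⁻¹ ≤ r := by rw [hr]; exact le_max_right _ _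
    have hr0 : 0 < r := hTi0.trans_le hrT
    have hx2r : ‖x₂‖ ≤ r := by
      rw [hn₂, div_eq_mul_inv]
      have h1 : ‖(q : ℚ_[p])‖ * ‖θ‖⁻¹ ≤ ‖θ‖⁻¹ := mul_le_of_le_one_left hTi0.le hqn
      have h0 : 0 ≤ ‖(q : ℚ_[p])‖ * ‖θ‖⁻¹ := by positivity
      nlinarith
    have hg : ∀ y : ℚ_[p], ‖y‖ ≤ r → ‖(θ * y + q) / (y + θ + q - 1)‖ ≤ r := by
      intro y hy
      rw [norm_div, hD y (by linarith), div_le_iff₀ hT0]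
      apply add_le
      · rw [norm_mul]; nlinarith
      · have : 1 ≤ r * ‖θ‖ := by
          rw [← inv_mul_cancel₀ hT0.ne']
          exact mul_le_mul_of_nonneg_right hrT hT0.le
        linarith
    have hfix : f x₂ = x₂ := by
      rw [hfx, div_pow, div_eq_iff (pow_ne_zero 2 (hD0 x₂ (by linarith)))]
      linear_combination (1 - x₂) * h₂
    have hinv : ∀ y : ℚ_[p], ‖y‖ ≤ r → ‖f y‖ ≤ r := by
      intro y hy
      rw [hfx, norm_pow]
      have := hg y hy
      have h0 := norm_nonneg ((θ * y + q) / (y + θ + q - 1))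
      nlinarith
    have hgd : ∀ y : ℚ_[p], ‖y‖ ≤ r →
        ‖(θ * y + q) / (y + θ + q - 1) - (θ * x₂ + q) / (x₂ + θ + q - 1)‖ = ‖y - x₂‖ := by
      intro y hy
      have h1 := hD0 y (by linarith)
      have h2 := hD0 x₂ (by linarith)
      have e : (θ * y + q) / (y + θ + q - 1) - (θ * x₂ + q) / (x₂ + θ + q - 1)
          = (y - x₂) * ((θ + -1) * (θ + q)) / ((y + θ + q - 1) * (x₂ + θ + q - 1)) := by
        rw [div_sub_div _ _ h1 h2]
        congr 1
        ring
      rw [e, norm_div, norm_mul, norm_mul, norm_mul, hD y (by linarith), hD x₂ (by linarith),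
        dom θ (-1) (by linarith), dom θ q (by linarith)]
      field_simp
    have hc : ∀ y : ℚ_[p], ‖y‖ ≤ r → ‖f y - x₂‖ ≤ r * ‖y - x₂‖ := by
      intro y hy
      have e : f y - x₂ = f y - f x₂ := by rw [hfix]
      rw [e, hfx, hfx, sq_sub_sq, norm_mul, hgd y hy]
      exact mul_le_mul_of_nonneg_right (add_le _ _ _ (hg y hy) (hg x₂ hx2r)) (norm_nonneg _)
    have hit : ∀ n : ℕ, ‖f^[n] x‖ ≤ r ∧ ‖f^[n] x - x₂‖ ≤ r ^ n * ‖x - x₂‖ := by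
      intro n
      induction n with
      | zero => simpa using hrx
      | succ n ih =>
        rw [Function.iterate_succ_apply']
        refine ⟨hinv _ ih.1, (hc _ ih.1).trans ?_⟩
        rw [pow_succ', mul_assoc]
        exact mul_le_mul_of_nonneg_left ih.2 hr0.le
    rw [tendsto_iff_norm_sub_tendsto_zero]
    refine squeeze_zero (fun n => norm_nonneg _) (fun n => (hit n).2) ?_
    simpa using (tendsto_pow_atTop_nhds_zero_of_lt_one hr0.le hr1).mul_const ‖x - x₂‖
end
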